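/- Let p be a prime, q = 1/p, and let k ≥ 0 and μ ≥ 1 be integers. Set s = ⌊(μ−1)/2⌋. Then P(2k+1, p^μ) = (Π_{2k+1}(q) / ((1−q)·Π_k(q²))) · (T_3(k,s) − q^μ·T_1(k,s)). -/

import Mathlib

/-- Number of symmetric `n × n` matrices over `ZMod m` with nonzero determinant. -/
noncomputable def Nsym (n m : ℕ) : ℕ :=
  Nat.card {A : Matrix (Fin n) (Fin n) (ZMod m) // A.IsSymm ∧ A.det ≠ 0}

/-- Proportion of symmetric `n × n` matrices over `ZMod m` with nonzero determinant. -/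
noncomputable def Psym (n m : ℕ) : ℝ :=
  (Nsym n m : ℝ) / (m : ℝ) ^ (n * (n + 1) / 2)

/-- `Π_n(t) = ∏_{j=1}^n (1 - t^j)`. -/
noncomputable def PiProd (n : ℕ) (t : ℝ) : ℝ :=
  ∏ j ∈ Finset.range n, (1 - t ^ (j + 1))

/-- `T_β(k,s)`: equal to `1` if `k = 0`, and to
`∑_{j=0}^{s} q^{βj} · Π_{k+j−1}(q²) / (Π_j(q²) · Π_{k−1}(q²))` if `k ≥ 1`. -/
noncomputable def T (q : ℝ) (β k s : ℕ) : ℝ :=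
  if k = 0 then 1
  else ∑ j ∈ Finset.range (s + 1),
    q ^ (β * j) * PiProd (k + j - 1) (q ^ 2) / (PiProd j (q ^ 2) * PiProd (k - 1) (q ^ 2))

open Matrix

section Counting

variable {R : Type} [CommRing R] {ι κ : Type}

/-- Symmetric matrices whose rows indexed by `d` are divisible by `π`. -/
def divSym (π : R) (d : ι → Prop) : Set (Matrix ι ι R) :=
  {A | A.IsSymm ∧ ∀ i j, d i → π ∣ A i j}

/-- The number of matrices in `divSym π d` with nonzero determinant. -/
noncomputable def divSymCount [Fintype ι] [DecidableEq ι] (π : R) (d : ι → Prop) : ℕ :=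
  Nat.card {A : Matrix ι ι R // A ∈ divSym π d ∧ A.det ≠ 0}

lemma reindex_mem_divSym {π : R} {d : ι → Prop} (e : κ ≃ ι) (A : Matrix κ κ R) :
    reindex e e A ∈ divSym π d ↔ A ∈ divSym π (d ∘ e) := by
  refine and_congr ?_ ?_
  · simp only [Matrix.IsSymm, reindex_apply, transpose_submatrix]
    exact (reindex e e).injective.eq_iff (a := Aᵀ) (b := A)
  · simp only [reindex_apply, submatrix_apply, Function.comp]
    refine ⟨fun h i j hi => ?_, fun h i j hi => h _ _ (by simpa using hi)⟩
    simpa using h (e i) (e j) hi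

lemma divSymCount_comp_equiv [Fintype ι] [DecidableEq ι] [Fintype κ] [DecidableEq κ]
    (π : R) (d : ι → Prop) (e : κ ≃ ι) : divSymCount π (d ∘ e) = divSymCount π d :=
  Nat.card_congr ((reindex e e).subtypeEquiv fun A =>
    and_congr (reindex_mem_divSym e A).symm (by simp))

/-- Eliminating an invertible pivot block preserves the number of completions. -/
lemma card_schur [Fintype ι] [DecidableEq ι] [Fintype κ] [DecidableEq κ]
    (π : R) (d : ι → Prop) (M : Matrix κ κ R) (hM : M.IsSymm) (hdet : IsUnit M.det)
    (B : Matrix κ ι R) (hB : ∀ i j, d j → π ∣ B i j) :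
    Nat.card {D : Matrix ι ι R // D ∈ divSym π d ∧ (fromBlocks M B Bᵀ D).det ≠ 0} =
      divSymCount π d := by
  let _ := M.invertibleOfIsUnitDet hdet
  have hS : (Bᵀ * ⅟M * B).IsSymm := by
    have h : (⅟M)ᵀ = ⅟M := by
      rw [invOf_eq_nonsing_inv, transpose_nonsing_inv, hM.eq]
    simp only [Matrix.IsSymm, transpose_mul, transpose_transpose, h, Matrix.mul_assoc]
  have hd : ∀ i j, d i → π ∣ (Bᵀ * ⅟M * B) i j := by
    intro i j hi
    rw [Matrix.mul_assoc, Matrix.mul_apply]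
    exact Finset.dvd_sum fun l _ => Dvd.dvd.mul_right (hB l i hi) _
  refine Nat.card_congr ((Equiv.subRight (Bᵀ * ⅟M * B)).subtypeEquiv fun D => ?_)
  refine and_congr (and_congr ⟨fun h => h.sub hS, fun h => ?_⟩ ?_) ?_
  · simpa using h.add hS
  · refine forall_congr' fun i => forall_congr' fun j => imp_congr_right fun hi => ?_
    simp only [Equiv.subRight_apply, Matrix.sub_apply]
    exact (dvd_sub_left (hd i j hi)).symm
  · rw [det_fromBlocks₁₁, Equiv.subRight_apply, ne_eq, hdet.mul_right_eq_zero]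

/-- Rows to the right of a pivot, compatible with the divisibility pattern `d`. -/
abbrev DivRow (π : R) (d : ι → Prop) : Type := {v : ι → R // ∀ i, d i → π ∣ v i}

/-- The symmetric matrix with corner `a`, first row `v` and remaining block `C`. -/
def bordered {S : Type} (a : S) (v : ι → S) (C : Matrix ι ι S) :
    Matrix (Unit ⊕ ι) (Unit ⊕ ι) S :=
  fromBlocks (of fun _ _ => a) (of fun _ => v) (of fun _ => v)ᵀ C

lemma bordered_mem_divSym {π : R} {d : ι → Prop} {a : R} {v : ι → R} {C : Matrix ι ι R} :
    bordered a v C ∈ divSym π (Sum.elim (fun _ => False) d) ↔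
      (∀ i, d i → π ∣ v i) ∧ C ∈ divSym π d := by
  have hs : (bordered a v C).IsSymm ↔ C.IsSymm := by
    rw [bordered, isSymm_fromBlocks_iff]
    simp [Matrix.IsSymm, transpose]
  simp only [divSym, Set.mem_ofPred_eq, hs]
  simp only [Sum.forall, bordered, fromBlocks_apply₁₁, fromBlocks_apply₁₂, fromBlocks_apply₂₁,
    fromBlocks_apply₂₂, of_apply, transpose_apply, Sum.elim_inl, Sum.elim_inr]
  constructor
  · rintro ⟨h, -, h2⟩
    exact ⟨fun i => (h2 i).1 (), h, fun i => (h2 i).2⟩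
  · rintro ⟨h2, h, h3⟩
    exact ⟨h, fun _ => ⟨fun _ => False.elim, fun _ => False.elim⟩,
      fun i => ⟨fun _ => h2 i, h3 i⟩⟩

lemma bordered_toBlocks {S : Type} {A : Matrix (Unit ⊕ ι) (Unit ⊕ ι) S} (hA : A.IsSymm) :
    bordered (A (.inl ()) (.inl ())) (fun i => A (.inl ()) (.inr i)) A.toBlocks₂₂ = A := by
  ext (i | i) (j | j)
  · rfl
  · rfl
  · exact hA.apply _ _
  · rfl

/-- Decomposition of `divSym` according to an unrestricted first row. -/
def divSymEquivSigma (π : R) (d : ι → Prop) (f : Matrix (Unit ⊕ ι) (Unit ⊕ ι) R → Prop) :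
    {A // A ∈ divSym π (Sum.elim (fun _ => False) d) ∧ f A} ≃
      Σ x : R × DivRow π d, {C : Matrix ι ι R // C ∈ divSym π d ∧ f (bordered x.1 x.2.1 C)} where
  toFun A :=
    have hA := bordered_toBlocks A.2.1.1
    have h := bordered_mem_divSym.1 (hA.symm ▸ A.2.1)
    ⟨⟨_, ⟨_, h.1⟩⟩, ⟨_, h.2, by
      have := A.2.2
      rw [← hA] at this
      exact this⟩⟩
  invFun y := ⟨bordered y.1.1 y.1.2.1 y.2.1,
    bordered_mem_divSym.2 ⟨y.1.2.2, y.2.2.1⟩, y.2.2.2⟩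
  left_inv A := Subtype.ext (bordered_toBlocks A.2.1.1)
  right_inv y := rfl

lemma card_divSym_bordered [Finite R] [Finite ι] (π : R) (d : ι → Prop)
    (f : Matrix (Unit ⊕ ι) (Unit ⊕ ι) R → Prop) [Fintype (R × DivRow π d)] :
    Nat.card {A // A ∈ divSym π (Sum.elim (fun _ => False) d) ∧ f A} =
      ∑ x : R × DivRow π d,
        Nat.card {C : Matrix ι ι R // C ∈ divSym π d ∧ f (bordered x.1 x.2.1 C)} := by
  rw [Nat.card_congr (divSymEquivSigma π d f), Nat.card_sigma]

lemma card_divRow [Finite R] [Fintype ι] (π : R) (d : ι → Prop) :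
    Nat.card (DivRow π d) =
      Nat.card {x : R // π ∣ x} ^ Nat.card {i // d i} * Nat.card R ^ Nat.card {i // ¬ d i} := by
  classical
  rw [Nat.card_congr (Equiv.subtypePiEquivPi (p := fun i x => d i → π ∣ x)), Nat.card_pi]
  have h : ∀ i, Nat.card {x : R // d i → π ∣ x} =
      if d i then Nat.card {x : R // π ∣ x} else Nat.card R := by
    intro i
    split_ifs with hi
    · simp [hi]
    · simp only [hi, false_imp_iff]
      exact Nat.card_congr (Equiv.subtypeUnivEquiv fun _ => trivial)
  simp only [h, Finset.prod_ite, Finset.prod_const, Nat.card_eq_fintype_card, Fintype.card_subtype]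

/-- `divSymCount` for a pattern with `r` divisible rows and `m` unrestricted rows. -/
noncomputable def patternCount (π : R) (r m : ℕ) : ℕ :=
  divSymCount π (Sum.elim (fun _ : Fin r => True) (fun _ : Fin m => False))

lemma divSymCount_eq_patternCount [Fintype ι] [DecidableEq ι] (π : R) (d : ι → Prop) :
    divSymCount π d = patternCount π (Nat.card {i // d i}) (Nat.card {i // ¬ d i}) := by
  classical
  let e : Fin (Nat.card {i // d i}) ⊕ Fin (Nat.card {i // ¬ d i}) ≃ ι :=
    (Equiv.sumCongr (Finite.equivFin _).symm (Finite.equivFin _).symm).trans (Equiv.sumCompl d)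
  rw [patternCount, ← divSymCount_comp_equiv π d e]
  congr 1
  funext x
  rcases x with x | x
  · simpa [e] using ((Finite.equivFin {i // d i}).symm x).2
  · simpa [e] using ((Finite.equivFin {i // ¬ d i}).symm x).2

/-- If the corner is divisible by `π` and the entry next to it is a unit, the leading `2 × 2` block
can be eliminated. -/
lemma card_bordered_bordered [Fintype ι] [DecidableEq ι] {π : R}
    (hπ : ∀ x : R, IsUnit x ↔ ¬ π ∣ x) (d : ι → Prop) {a b c : R} (ha : π ∣ a) (hb : IsUnit b)
    {v w : ι → R} (hv : ∀ i, d i → π ∣ v i) (hw : ∀ i, d i → π ∣ w i) :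
    Nat.card {C : Matrix ι ι R // C ∈ divSym π d ∧
      (bordered a (Sum.elim (fun _ => b) v) (bordered c w C)).det ≠ 0} = divSymCount π d := by
  let M : Matrix (Unit ⊕ Unit) (Unit ⊕ Unit) R := bordered a (fun _ => b) (of fun _ _ => c)
  let B : Matrix (Unit ⊕ Unit) ι R := of (Sum.elim (fun _ => v) (fun _ => w))
  have hM : M.IsSymm := by
    ext (i | i) (j | j) <;> rfl
  have hdet : M.det = a * c - b * b := by
    let e : Fin 2 ≃ Unit ⊕ Unit :=
      { toFun := ![.inl (), .inr ()]
        invFun := Sum.elim (fun _ => 0) (fun _ => 1)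
        left_inv := fun i => by fin_cases i <;> rfl
        right_inv := by rintro (i | i) <;> rfl }
    rw [← det_submatrix_equiv_self e M, det_fin_two]
    rfl
  have hunit : IsUnit M.det := by
    rw [hdet, hπ, dvd_sub_right (ha.mul_right c), ← hπ]
    exact hb.mul hb
  rw [← card_schur π d M hM hunit B (by
    rintro (i | i) j hj
    · exact hv j hj
    · exact hw j hj)]
  refine Nat.card_congr (Equiv.subtypeEquivRight fun C => and_congr_right fun _ => ?_)
  rw [← det_submatrix_equiv_self (Equiv.sumAssoc Unit Unit ι)]
  have : (bordered a (Sum.elim (fun _ => b) v) (bordered c w C)).submatrix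
      (Equiv.sumAssoc Unit Unit ι) (Equiv.sumAssoc Unit Unit ι) = fromBlocks M B Bᵀ C := by
    ext ((i | i) | i) ((j | j) | j) <;> rfl
  rw [this]

lemma card_bordered_of_isUnit_head [Finite R] [Fintype ι] [DecidableEq ι] {π : R}
    (hπ : ∀ x : R, IsUnit x ↔ ¬ π ∣ x) (d : ι → Prop) {a : R} (ha : π ∣ a)
    {v : Unit ⊕ ι → R} (hb : IsUnit (v (.inl ()))) (hv : ∀ i, d i → π ∣ v (.inr i)) :
    Nat.card {C : Matrix (Unit ⊕ ι) (Unit ⊕ ι) R //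
      C ∈ divSym π (Sum.elim (fun _ => False) d) ∧ (bordered a v C).det ≠ 0} =
      Nat.card R * Nat.card (DivRow π d) * divSymCount π d := by
  classical
  have := Fintype.ofFinite (R × DivRow π d)
  rw [card_divSym_bordered π d (fun C => (bordered a v C).det ≠ 0)]
  have hv' : v = Sum.elim (fun _ => v (.inl ())) (fun i => v (.inr i)) := by
    ext (i | i) <;> rfl
  rw [hv', Finset.sum_congr rfl fun x _ => card_bordered_bordered hπ d ha hb hv x.2.2,
    Finset.sum_const, Finset.card_univ, ← Nat.card_eq_fintype_card, Nat.card_prod, smul_eq_mul]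

lemma card_bordered_of_isUnit [Finite R] [Fintype ι] [DecidableEq ι] {π : R}
    (hπ : ∀ x : R, IsUnit x ↔ ¬ π ∣ x) (d : ι → Prop) {a : R} (ha : π ∣ a)
    {v : ι → R} (hv : ∀ i, d i → π ∣ v i) {i₀ : ι} (hi₀ : IsUnit (v i₀)) :
    Nat.card {C : Matrix ι ι R // C ∈ divSym π d ∧ (bordered a v C).det ≠ 0} =
      Nat.card (DivRow π d) *
        patternCount π (Nat.card {i // d i}) (Nat.card {i // ¬ d i} - 1) := by
  classical
  have hd₀ : ¬ d i₀ := fun h => (hπ _).1 hi₀ (hv i₀ h)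
  let ι' := {i // i ≠ i₀}
  let d' : ι' → Prop := fun i => d i.1
  let e : Unit ⊕ ι' ≃ ι :=
    { toFun := Sum.elim (fun _ => i₀) Subtype.val
      invFun := fun i => if h : i = i₀ then .inl () else .inr ⟨i, h⟩
      left_inv := by
        rintro (i | i)
        · simp
        · simp [i.2]
      right_inv := by
        intro i
        by_cases h : i = i₀ <;> simp [h] }
  have hde : d ∘ e = Sum.elim (fun _ => False) d' := by
    ext (i | i)
    · simpa [e] using hd₀
    · simp [e, d']
  have hr : Nat.card {i // d' i} = Nat.card {i // d i} :=
    Nat.card_congr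
      { toFun := fun i => ⟨i.1.1, i.2⟩
        invFun := fun i => ⟨⟨i.1, fun h => hd₀ (h ▸ i.2)⟩, i.2⟩
        left_inv := fun _ => rfl
        right_inv := fun _ => rfl }
  have hm : Nat.card {i // ¬ d i} = Nat.card {i // ¬ d' i} + 1 := by
    rw [← Finite.card_option]
    refine Nat.card_congr
      { toFun := fun i => if h : i.1 = i₀ then none else some ⟨⟨i.1, h⟩, i.2⟩
        invFun := fun o => o.elim ⟨i₀, hd₀⟩ fun i => ⟨i.1.1, i.2⟩
        left_inv := ?_
        right_inv := ?_ }
    · rintro ⟨i, hi⟩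
      by_cases h : i = i₀
      · subst h; simp
      · simp [h]
    · rintro (_ | ⟨⟨i, h⟩, hi⟩)
      · simp
      · simp [h]
  have key := card_bordered_of_isUnit_head hπ d' ha (v := v ∘ e) hi₀ fun i hi => hv _ hi
  have hcongr : Nat.card {C : Matrix ι ι R // C ∈ divSym π d ∧ (bordered a v C).det ≠ 0} =
      Nat.card {C : Matrix (Unit ⊕ ι') (Unit ⊕ ι') R //
        C ∈ divSym π (Sum.elim (fun _ => False) d') ∧ (bordered a (v ∘ e) C).det ≠ 0} := by
    refine (Nat.card_congr ((reindex e e).subtypeEquiv fun C => ?_)).symm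
    rw [← hde]
    refine and_congr (reindex_mem_divSym e C).symm (not_congr ?_)
    rw [← det_submatrix_equiv_self (Equiv.sumCongr (Equiv.refl Unit) e)]
    have : (bordered a v (reindex e e C)).submatrix (Equiv.sumCongr (Equiv.refl Unit) e)
        (Equiv.sumCongr (Equiv.refl Unit) e) = bordered a (v ∘ e) C := by
      ext (i | i) (j | j)
      · rfl
      · rfl
      · rfl
      · simp [bordered]
    rw [this]
  rw [hcongr, key, divSymCount_eq_patternCount, card_divRow, card_divRow, hr, hm,
    Nat.add_sub_cancel]
  ring

lemma card_bordered_of_isUnit_corner [Fintype ι] [DecidableEq ι] {π : R} (d : ι → Prop)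
    {a : R} (ha : IsUnit a) {v : ι → R} (hv : ∀ i, d i → π ∣ v i) :
    Nat.card {C : Matrix ι ι R // C ∈ divSym π d ∧ (bordered a v C).det ≠ 0} =
      divSymCount π d :=
  card_schur π d (of fun _ _ : Unit => a) (by ext; rfl) (by simpa using ha) (of fun _ => v)
    fun _ => hv

lemma mem_divSym_and_forall_dvd {π : R} {d : ι → Prop} (A : Matrix (Unit ⊕ ι) (Unit ⊕ ι) R) :
    (A ∈ divSym π (Sum.elim (fun _ => False) d) ∧ ∀ j, π ∣ A (.inl ()) j) ↔
      A ∈ divSym π (Sum.elim (fun _ => True) d) := by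
  constructor
  · rintro ⟨⟨hs, hd⟩, hr⟩
    exact ⟨hs, Sum.rec (fun _ j _ => hr j) fun i j hi => hd (.inr i) j hi⟩
  · rintro ⟨hs, hd⟩
    exact ⟨⟨hs, Sum.rec (fun _ _ h => h.elim) fun i j hi => hd (.inr i) j hi⟩,
      fun j => hd (.inl ()) j trivial⟩

/-- Conditioning on the first unrestricted row: either its corner is a unit, or the corner is not
but another entry is, or the whole row is divisible by `π`. -/
lemma divSymCount_recurrence [Finite R] [Fintype ι] [DecidableEq ι] {π : R}
    (hπ : ∀ x : R, IsUnit x ↔ ¬ π ∣ x) (d : ι → Prop) :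
    divSymCount π (Sum.elim (fun _ : Unit => False) d) =
      Nat.card {x : R // ¬ π ∣ x} * Nat.card (DivRow π d) * divSymCount π d +
      Nat.card {x : R // π ∣ x} * Nat.card {v : DivRow π d // ¬ ∀ i, π ∣ v.1 i} *
        (Nat.card (DivRow π d) *
          patternCount π (Nat.card {i // d i}) (Nat.card {i // ¬ d i} - 1)) +
      divSymCount π (Sum.elim (fun _ : Unit => True) d) := by
  classical
  have := Fintype.ofFinite R
  have := Fintype.ofFinite (DivRow π d)
  have h3 : divSymCount π (Sum.elim (fun _ : Unit => True) d) =
      Nat.card {A // A ∈ divSym π (Sum.elim (fun _ : Unit => False) d) ∧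
        ((∀ j, π ∣ A (.inl ()) j) ∧ A.det ≠ 0)} :=
    Nat.card_congr (Equiv.subtypeEquivRight fun A => by
      rw [← mem_divSym_and_forall_dvd, and_assoc])
  rw [h3, divSymCount, card_divSym_bordered π d (fun A => A.det ≠ 0),
    card_divSym_bordered π d (fun A => (∀ j, π ∣ A (.inl ()) j) ∧ A.det ≠ 0)]
  have h1 : Nat.card {x : R // ¬ π ∣ x} * Nat.card (DivRow π d) * divSymCount π d =
      ∑ x : R × DivRow π d, if ¬ π ∣ x.1 then divSymCount π d else 0 := by
    rw [← Finset.sum_filter, Finset.sum_const, smul_eq_mul, ← Fintype.card_subtype,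
      ← Nat.card_eq_fintype_card, ← Nat.card_prod]
    congr 1
    exact Nat.card_congr
      { toFun := fun y => ⟨(y.1.1, y.2), y.1.2⟩
        invFun := fun y => (⟨y.1.1, y.2⟩, y.1.2)
        left_inv := fun _ => rfl
        right_inv := fun _ => rfl }
  have h2 : ∀ c : ℕ, Nat.card {x : R // π ∣ x} *
      Nat.card {v : DivRow π d // ¬ ∀ i, π ∣ v.1 i} * c =
      ∑ x : R × DivRow π d, if π ∣ x.1 ∧ ¬ ∀ i, π ∣ x.2.1 i then c else 0 := by
    intro c
    rw [← Finset.sum_filter, Finset.sum_const, smul_eq_mul, ← Fintype.card_subtype,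
      ← Nat.card_eq_fintype_card, ← Nat.card_prod]
    congr 1
    exact Nat.card_congr
      { toFun := fun y => ⟨(y.1.1, y.2.1), y.1.2, y.2.2⟩
        invFun := fun y => (⟨y.1.1, y.2.1⟩, ⟨y.1.2, y.2.2⟩)
        left_inv := fun _ => rfl
        right_inv := fun _ => rfl }
  rw [h1, h2, ← Finset.sum_add_distrib, ← Finset.sum_add_distrib]
  refine Finset.sum_congr rfl fun x _ => ?_
  have hrow : ∀ C, (∀ j, π ∣ bordered x.1 x.2.1 C (.inl ()) j) ↔
      π ∣ x.1 ∧ ∀ i, π ∣ x.2.1 i := by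
    intro C
    simp [Sum.forall, bordered]
  simp only [hrow]
  by_cases ha : π ∣ x.1
  · by_cases hv : ∀ i, π ∣ x.2.1 i
    · simp [ha, hv]
    · obtain ⟨i, hi⟩ := not_forall.1 hv
      simp only [ha, hv, not_true, if_false, not_false_iff, and_self, if_true, and_false,
        false_and]
      rw [card_bordered_of_isUnit hπ d ha x.2.2 ((hπ _).2 hi)]
      simp
  · simp only [ha, not_false_iff, if_true, false_and, if_false, and_false]
    rw [card_bordered_of_isUnit_corner d ((hπ _).2 ha) x.2.2]
    simp

lemma card_divRow_not_forall_dvd [Finite R] [Fintype ι] (π : R) (d : ι → Prop) :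
    Nat.card {v : DivRow π d // ¬ ∀ i, π ∣ v.1 i} + Nat.card {x : R // π ∣ x} ^ Nat.card ι =
      Nat.card (DivRow π d) := by
  classical
  have h : Nat.card {v : DivRow π d // ∀ i, π ∣ v.1 i} =
      Nat.card {x : R // π ∣ x} ^ Nat.card ι := by
    rw [← Nat.card_fun]
    exact Nat.card_congr
      { toFun := fun v i => ⟨v.1.1 i, v.2 i⟩
        invFun := fun w => ⟨⟨fun i => (w i).1, fun i _ => (w i).2⟩, fun i => (w i).2⟩
        left_inv := fun _ => rfl
        right_inv := fun _ => rfl }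
  rw [← h, add_comm, ← Nat.card_sum]
  exact Nat.card_congr (Equiv.sumCompl _)

lemma card_not_dvd [Finite R] (π : R) :
    Nat.card {x : R // ¬ π ∣ x} + Nat.card {x : R // π ∣ x} = Nat.card R := by
  classical
  rw [add_comm, ← Nat.card_sum]
  exact Nat.card_congr (Equiv.sumCompl _)

lemma patternCount_succ [Finite R] {π : R} (hπ : ∀ x : R, IsUnit x ↔ ¬ π ∣ x) (r m : ℕ)
    {ρ N : ℝ} (hρ : (Nat.card {x : R // π ∣ x} : ℝ) = ρ) (hN : (Nat.card R : ℝ) = N) :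
    (patternCount π r (m + 1) : ℝ) =
      (N - ρ) * (ρ ^ r * N ^ m) * patternCount π r m +
      ρ * (ρ ^ r * N ^ m - ρ ^ (r + m)) * (ρ ^ r * N ^ m * patternCount π r (m - 1)) +
      patternCount π (r + 1) m := by
  have key := divSymCount_recurrence hπ (Sum.elim (fun _ : Fin r => True) (fun _ : Fin m => False))
  have h0 := card_divRow π (Sum.elim (fun _ : Fin r => True) (fun _ : Fin m => False))
  have h1 := card_divRow_not_forall_dvd π
    (Sum.elim (fun _ : Fin r => True) (fun _ : Fin m => False))
  have h2 := card_not_dvd π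
  simp only [divSymCount_eq_patternCount] at key
  have e : ∀ {α β : Type} [Finite α] [Finite β] (p : α ⊕ β → Prop),
      Nat.card {x // p x} = Nat.card {x // p (.inl x)} + Nat.card {x // p (.inr x)} := by
    intro α β _ _ p
    rw [← Nat.card_sum]
    exact Nat.card_congr (Equiv.subtypeSum (p := p))
  simp only [e, Sum.elim_inl, Sum.elim_inr] at key h0 h1
  simp at key h0 h1
  rw [add_comm 1 m, add_comm 1 r, h0] at key
  rw [h0] at h1
  have h1' := congrArg (Nat.cast : ℕ → ℝ) h1
  have h2' := congrArg (Nat.cast : ℕ → ℝ) h2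
  push_cast at h1' h2'
  rw [hρ, hN] at h1' h2'
  rw [key]
  push_cast
  rw [hρ, hN, eq_sub_of_add_eq h1', eq_sub_of_add_eq h2']

/-- The number of matrices in `divSym` for a pattern with `r` divisible and `m` unrestricted rows,
when `ρ` elements of a ring of order `N` are divisible by `π`. -/
noncomputable def patternWeight (ρ N : ℝ) (r m : ℕ) : ℝ :=
  ρ ^ (r * (r + 1) / 2 + r * m) * N ^ (m * (m + 1) / 2)

lemma succ_mul_succ_succ_half (n : ℕ) : (n + 1) * (n + 1 + 1) / 2 = n * (n + 1) / 2 + (n + 1) := by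
  have : (n + 1) * (n + 1 + 1) = n * (n + 1) + 2 * (n + 1) := by ring
  omega

lemma patternWeight_succ_right (ρ N : ℝ) (r m : ℕ) :
    patternWeight ρ N r (m + 1) = ρ ^ r * N ^ (m + 1) * patternWeight ρ N r m := by
  rw [patternWeight, patternWeight, succ_mul_succ_succ_half]
  ring

lemma patternWeight_succ_left (ρ N : ℝ) (r m : ℕ) :
    patternWeight ρ N (r + 1) m = ρ ^ (r + 1 + m) * patternWeight ρ N r m := by
  rw [patternWeight, patternWeight, succ_mul_succ_succ_half]
  ring

lemma patternWeight_ne_zero {ρ N : ℝ} (hρ : ρ ≠ 0) (hN : N ≠ 0) (r m : ℕ) :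
    patternWeight ρ N r m ≠ 0 :=
  mul_ne_zero (pow_ne_zero _ hρ) (pow_ne_zero _ hN)

/-- The proportion of matrices with nonzero determinant for a given pattern. -/
noncomputable def patternDensity (π : R) (r m : ℕ) : ℝ :=
  patternCount π r m / patternWeight (Nat.card {x : R // π ∣ x}) (Nat.card R) r m

lemma patternDensity_succ [Finite R] {π : R} (hπ : ∀ x : R, IsUnit x ↔ ¬ π ∣ x)
    {q : ℝ} (hq : q ≠ 0) (hqR : (Nat.card {x : R // π ∣ x} : ℝ) = q * Nat.card R) (r m : ℕ) :
    patternDensity π r (m + 1) = (1 - q) * patternDensity π r m +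
      q * (1 - q ^ m) * patternDensity π r (m - 1) +
      q ^ (m + 1) * patternDensity π (r + 1) m := by
  have hN : (Nat.card R : ℝ) ≠ 0 := by exact_mod_cast Nat.card_pos.ne'
  simp only [patternDensity, patternCount_succ hπ r m rfl rfl, hqR]
  generalize (Nat.card R : ℝ) = N at hN
  have hρ : q * N ≠ 0 := mul_ne_zero hq hN
  rcases m with _ | m
  · have hw := patternWeight_ne_zero hρ hN r 0
    rw [patternWeight_succ_left, patternWeight_succ_right]
    simp only [zero_add, pow_zero, add_zero, sub_self, mul_zero, zero_mul, mul_one]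
    field_simp
    ring
  · have hw := patternWeight_ne_zero hρ hN r m
    rw [patternWeight_succ_left, patternWeight_succ_right _ _ _ (m + 1), patternWeight_succ_right,
      Nat.add_sub_cancel]
    field_simp
    ring

/-- Symmetric matrices with entries in a subtype are functions on unordered pairs. -/
lemma card_isSymm_forall (r : ℕ) {S : Type} [Finite S] (Q : S → Prop) :
    Nat.card {A : Matrix (Fin r) (Fin r) S // A.IsSymm ∧ ∀ i j, Q (A i j)} =
      Nat.card {x // Q x} ^ (r * (r + 1) / 2) := by
  have hs : r * (r + 1) / 2 = Nat.card (Sym2 (Fin r)) := by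
    rw [Nat.card_eq_fintype_card, Sym2.card, Fintype.card_fin, Nat.choose_two_right,
      Nat.add_sub_cancel, mul_comm]
  rw [hs, ← Nat.card_fun]
  exact Nat.card_congr
    { toFun := fun A => Sym2.lift ⟨fun i j => ⟨A.1 i j, A.2.2 i j⟩,
        fun i j => Subtype.ext (A.2.1.apply j i)⟩
      invFun := fun f => ⟨of fun i j => (f s(i, j)).1,
        by ext i j; simp [Sym2.eq_swap], fun i j => (f s(i, j)).2⟩
      left_inv := fun A => rfl
      right_inv := fun f => by
        ext x
        induction x with | _ i j => rfl }

/-- A homomorphism of finite groups pushes the uniform measure to the uniform measure on its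
range. -/
lemma card_preimage_mul_card_range {G H : Type} [AddCommGroup G] [AddCommGroup H] [Finite G]
    (f : G →+ H) (Q : H → Prop) :
    Nat.card {g // Q (f g)} * Nat.card f.range =
      Nat.card {h // h ∈ f.range ∧ Q h} * Nat.card G := by
  have hfib : ∀ h ∈ f.range, Nat.card {g // f g = h} = Nat.card f.ker := by
    rintro _ ⟨g₀, rfl⟩
    refine Nat.card_congr ((Equiv.subRight g₀).subtypeEquiv fun g => ?_)
    simp [AddMonoidHom.mem_ker, sub_eq_zero]
  have hmain : ∀ P : H → Prop,
      Nat.card {g // P (f g)} = Nat.card {h // h ∈ f.range ∧ P h} * Nat.card f.ker := by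
    intro P
    let e : {g // P (f g)} ≃ Σ h : {h // h ∈ f.range ∧ P h}, {g // f g = h.1} :=
      { toFun := fun g => ⟨⟨f g.1, ⟨g.1, rfl⟩, g.2⟩, ⟨g.1, rfl⟩⟩
        invFun := fun y => ⟨y.2.1, y.2.2.symm ▸ y.1.2.2⟩
        left_inv := fun _ => rfl
        right_inv := by
          rintro ⟨⟨h, hh⟩, ⟨g, hg⟩⟩
          dsimp only at hg
          subst hg
          rfl }
    have : Finite f.range := Finite.of_surjective f.rangeRestrict f.rangeRestrict_surjective
    have : Finite {h // h ∈ f.range ∧ P h} :=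
      Finite.of_injective (fun h => (⟨h.1, h.2.1⟩ : f.range)) fun a b hab =>
        Subtype.ext (congrArg (fun x => x.1) hab)
    have := Fintype.ofFinite {h // h ∈ f.range ∧ P h}
    rw [Nat.card_congr e, Nat.card_sigma, Finset.sum_congr rfl fun h _ => hfib h.1 h.2.1,
      Finset.sum_const, Finset.card_univ, ← Nat.card_eq_fintype_card, smul_eq_mul]
  have hG : Nat.card G = Nat.card f.range * Nat.card f.ker := by
    have := hmain fun _ => True
    rw [Nat.card_congr (Equiv.subtypeUnivEquiv fun _ => trivial)] at this
    simpa using this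
  rw [hmain Q, hG]
  ring

/-- The additive group of symmetric matrices. -/
def symmSubgroup (S : Type) [CommRing S] (r : ℕ) : AddSubgroup (Matrix (Fin r) (Fin r) S) where
  carrier := {A | A.IsSymm}
  zero_mem' := Matrix.isSymm_zero
  add_mem' := fun ha hb => ha.add hb
  neg_mem' := fun ha => ha.neg

lemma card_symmSubgroup (S : Type) [CommRing S] [Finite S] (r : ℕ) :
    Nat.card (symmSubgroup S r) = Nat.card S ^ (r * (r + 1) / 2) := by
  have h := card_isSymm_forall r fun _ : S => True
  rw [Nat.card_congr (Equiv.subtypeUnivEquiv fun _ => trivial)] at h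
  rw [← h]
  exact Nat.card_congr (Equiv.subtypeEquivRight fun A => by simp [symmSubgroup])

lemma card_smul_det_ne_zero [Finite R] {π : R} (r : ℕ) :
    Nat.card {X : symmSubgroup R r // (π • X.1).det ≠ 0} *
        Nat.card {x : R // π ∣ x} ^ (r * (r + 1) / 2) =
      patternCount π r 0 * Nat.card R ^ (r * (r + 1) / 2) := by
  let f : symmSubgroup R r →+ Matrix (Fin r) (Fin r) R :=
    (DistribSMul.toAddMonoidHom _ π).comp (symmSubgroup R r).subtype
  have hmem : ∀ A, A ∈ f.range ↔ A.IsSymm ∧ ∀ i j, π ∣ A i j := by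
    intro A
    constructor
    · rintro ⟨X, rfl⟩
      exact ⟨X.2.smul π, fun i j => ⟨X.1 i j, rfl⟩⟩
    · rintro ⟨hA, hd⟩
      choose g hg using hd
      refine ⟨⟨of fun i j => if i ≤ j then g i j else g j i, ?_⟩, ?_⟩
      · ext i j
        rcases lt_trichotomy i j with h | rfl | h
        · simp [h.le, h.not_ge]
        · simp
        · simp [h.le, h.not_ge]
      · ext i j
        change π * (if i ≤ j then g i j else g j i) = A i j
        split_ifs
        · exact (hg i j).symm
        · rw [← hg j i, hA.apply]
  have key := card_preimage_mul_card_range f fun A => A.det ≠ 0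
  rw [card_symmSubgroup] at key
  have h1 : Nat.card f.range = Nat.card {x : R // π ∣ x} ^ (r * (r + 1) / 2) := by
    rw [← card_isSymm_forall]
    exact Nat.card_congr (Equiv.subtypeEquivRight hmem)
  have h2 : Nat.card {A // A ∈ f.range ∧ A.det ≠ 0} = patternCount π r 0 := by
    have h := divSymCount_eq_patternCount π (fun _ : Fin r => True)
    have hc : Nat.card {_i : Fin r // True} = r := by simp
    have hc' : Nat.card {_i : Fin r // ¬ True} = 0 := by simp
    rw [hc, hc'] at h
    rw [← h]
    exact Nat.card_congr (Equiv.subtypeEquivRight fun A => by simp [hmem, divSym])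
  rw [h1, h2] at key
  exact key

end Counting

lemma natCast_pow_mul_eq_zero_iff {p : ℕ} (hp : p.Prime) {μ r : ℕ} (hr : r ≤ μ)
    (x : ZMod (p ^ μ)) : (p : ZMod (p ^ μ)) ^ r * x = 0 ↔
      ZMod.castHom (pow_dvd_pow p (Nat.sub_le μ r)) (ZMod (p ^ (μ - r))) x = 0 := by
  have : NeZero (p ^ μ) := ⟨pow_ne_zero _ hp.ne_zero⟩
  obtain ⟨n, rfl⟩ := ZMod.natCast_zmod_surjective x
  rw [map_natCast, ZMod.natCast_eq_zero_iff, ← Nat.cast_pow, ← Nat.cast_mul,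
    ZMod.natCast_eq_zero_iff]
  conv_lhs => rw [← Nat.add_sub_cancel' hr, pow_add]
  exact Nat.mul_dvd_mul_iff_left (pow_pos hp.pos r)

lemma card_isSymm_castHom_det {m n : ℕ} [NeZero n] (h : m ∣ n) (r : ℕ) :
    Nat.card {X : symmSubgroup (ZMod n) r // ZMod.castHom h (ZMod m) X.1.det ≠ 0} *
        m ^ (r * (r + 1) / 2) = Nsym r m * n ^ (r * (r + 1) / 2) := by
  let f : symmSubgroup (ZMod n) r →+ Matrix (Fin r) (Fin r) (ZMod m) :=
    (ZMod.castHom h (ZMod m)).mapMatrix.toAddMonoidHom.comp (symmSubgroup (ZMod n) r).subtype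
  have : NeZero m := ⟨fun hm => NeZero.ne n (by simpa [hm] using h)⟩
  have hmem : ∀ A, A ∈ f.range ↔ A.IsSymm := by
    intro A
    constructor
    · rintro ⟨X, rfl⟩
      exact X.2.map _
    · intro hA
      refine ⟨⟨A.map fun x => (x.val : ZMod n), hA.map _⟩, ?_⟩
      ext i j
      change ZMod.castHom h (ZMod m) (((A i j).val : ℕ) : ZMod n) = A i j
      rw [map_natCast, ZMod.natCast_zmod_val]
  have key := card_preimage_mul_card_range f fun A => A.det ≠ 0
  rw [card_symmSubgroup, Nat.card_zmod] at key
  have h1 : Nat.card f.range = m ^ (r * (r + 1) / 2) := by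
    have := card_symmSubgroup (ZMod m) r
    rw [Nat.card_zmod] at this
    rw [← this]
    exact Nat.card_congr (Equiv.subtypeEquivRight hmem)
  have h2 : Nat.card {A // A ∈ f.range ∧ A.det ≠ 0} = Nsym r m :=
    Nat.card_congr (Equiv.subtypeEquivRight fun A => by rw [hmem])
  rw [h1, h2] at key
  rw [← key]
  congr 1
  refine Nat.card_congr (Equiv.subtypeEquivRight fun X => not_congr ?_)
  rw [RingHom.map_det]
  rfl

lemma Psym_one (n : ℕ) : Psym n 1 = 0 := by
  have : Nsym n 1 = 0 := by
    rw [Nsym, Nat.card_eq_zero]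
    exact Or.inl ⟨fun A => A.2.2 (Subsingleton.elim _ _)⟩
  simp [Psym, this]

lemma isUnit_iff_not_dvd_zmod {p : ℕ} (hp : p.Prime) {μ : ℕ} (hμ : μ ≠ 0) (x : ZMod (p ^ μ)) :
    IsUnit x ↔ ¬ (p : ZMod (p ^ μ)) ∣ x := by
  have : NeZero (p ^ μ) := ⟨pow_ne_zero _ hp.ne_zero⟩
  obtain ⟨n, rfl⟩ := ZMod.natCast_zmod_surjective x
  rw [ZMod.isUnit_iff_coprime, Nat.coprime_pow_right_iff (Nat.pos_of_ne_zero hμ),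
    Nat.coprime_comm, hp.coprime_iff_not_dvd]
  refine not_congr ⟨fun h => Nat.cast_dvd_cast h, ?_⟩
  rintro ⟨y, hy⟩
  obtain ⟨k, rfl⟩ := ZMod.natCast_zmod_surjective y
  rw [← Nat.cast_mul, ZMod.natCast_eq_natCast_iff] at hy
  have := hy.of_dvd (dvd_pow_self p hμ)
  exact (this.dvd_iff dvd_rfl).2 (dvd_mul_right p k)

lemma card_dvd_zmod {p : ℕ} (hp : p.Prime) {μ : ℕ} (hμ : μ ≠ 0) :
    (Nat.card {x : ZMod (p ^ μ) // (p : ZMod (p ^ μ)) ∣ x} : ℝ) =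
      (1 / p : ℝ) * Nat.card (ZMod (p ^ μ)) := by
  have : NeZero (p ^ μ) := ⟨pow_ne_zero _ hp.ne_zero⟩
  have hp0 : (p : ℝ) ≠ 0 := by exact_mod_cast hp.ne_zero
  have h1 := card_not_dvd (p : ZMod (p ^ μ))
  have h2 : Nat.card {x : ZMod (p ^ μ) // ¬ (p : ZMod (p ^ μ)) ∣ x} = (p ^ μ).totient := by
    rw [← ZMod.card_units_eq_totient, ← Nat.card_eq_fintype_card]
    refine Nat.card_congr ((Equiv.subtypeEquivRight fun x =>
      (isUnit_iff_not_dvd_zmod hp hμ x).symm).trans ?_)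
    exact
      { toFun := fun x => x.2.unit
        invFun := fun u => ⟨u, u.isUnit⟩
        left_inv := fun _ => rfl
        right_inv := fun u => Units.ext rfl }
  obtain ⟨ν, rfl⟩ := Nat.exists_eq_succ_of_ne_zero hμ
  rw [h2, Nat.card_zmod, Nat.totient_prime_pow_succ hp] at h1
  have h3 := congrArg (Nat.cast : ℕ → ℝ) h1
  push_cast [Nat.cast_sub hp.one_le] at h3
  rw [Nat.card_zmod, eq_sub_of_add_eq' h3]
  push_cast [pow_succ]
  field_simp
  ring

lemma patternDensity_zero_right {p : ℕ} (hp : p.Prime) (μ r : ℕ) :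
    patternDensity (p : ZMod (p ^ μ)) r 0 = Psym r (p ^ (μ - r)) := by
  have : NeZero (p ^ μ) := ⟨pow_ne_zero _ hp.ne_zero⟩
  have hp0 : (p : ℝ) ≠ 0 := by exact_mod_cast hp.ne_zero
  have hρ : (Nat.card {x : ZMod (p ^ μ) // (p : ZMod (p ^ μ)) ∣ x} : ℝ) ≠ 0 := by
    have : Nonempty {x : ZMod (p ^ μ) // (p : ZMod (p ^ μ)) ∣ x} := ⟨⟨0, dvd_zero _⟩⟩
    exact_mod_cast Nat.card_pos.ne'
  have h1 := congrArg (Nat.cast : ℕ → ℝ) (card_smul_det_ne_zero (π := (p : ZMod (p ^ μ))) r)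
  simp only [det_smul, Fintype.card_fin, Nat.card_zmod, Nat.cast_mul, Nat.cast_pow] at h1
  simp only [patternDensity, patternWeight, mul_zero, add_zero, zero_mul, Nat.zero_div, pow_zero,
    mul_one]
  rw [div_eq_iff (pow_ne_zero _ hρ)]
  by_cases hr : r ≤ μ
  · simp only [ne_eq, natCast_pow_mul_eq_zero_iff hp hr] at h1
    have h2 := congrArg (Nat.cast : ℕ → ℝ)
      (card_isSymm_castHom_det (pow_dvd_pow p (Nat.sub_le μ r)) r)
    simp only [ne_eq, Nat.cast_mul, Nat.cast_pow] at h2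
    rw [← mul_left_inj' (pow_ne_zero (r * (r + 1) / 2) (pow_ne_zero μ hp0)), ← h1, Psym]
    push_cast
    field_simp
    linear_combination h2
  · have hzero : (p : ZMod (p ^ μ)) ^ r = 0 := by
      rw [← Nat.cast_pow, ZMod.natCast_eq_zero_iff]
      exact pow_dvd_pow p (not_le.1 hr).le
    simp only [hzero, zero_mul, ne_eq, not_true, Nat.card_of_isEmpty, Nat.cast_zero] at h1
    rw [Nat.sub_eq_zero_of_le (not_le.1 hr).le, pow_zero, Psym_one, zero_mul]
    exact (mul_eq_zero.1 h1.symm).resolve_right (pow_ne_zero _ (pow_ne_zero _ hp0))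

lemma patternDensity_zero_left {p : ℕ} (μ n : ℕ) :
    patternDensity (p : ZMod (p ^ μ)) 0 n = Psym n (p ^ μ) := by
  have h := divSymCount_eq_patternCount (p : ZMod (p ^ μ)) (fun _ : Fin n => False)
  have hc : Nat.card {_i : Fin n // False} = 0 := by simp
  have hc' : Nat.card {_i : Fin n // ¬ False} = n := by simp
  rw [hc, hc'] at h
  have hn : divSymCount (p : ZMod (p ^ μ)) (fun _ : Fin n => False) = Nsym n (p ^ μ) :=
    Nat.card_congr (Equiv.subtypeEquivRight fun A => by simp [divSym])
  simp [patternDensity, patternWeight, ← h, hn, Psym]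

section QSeries

variable {K : Type*} [Field K]

/-- The finite `q`-Pochhammer product `∏_{j=1}^n (1 - x^j)`. -/
def qPoch (x : K) (n : ℕ) : K := ∏ j ∈ Finset.range n, (1 - x ^ (j + 1))

lemma qPoch_zero (x : K) : qPoch x 0 = 1 := Finset.prod_range_zero _

lemma qPoch_succ (x : K) (n : ℕ) : qPoch x (n + 1) = qPoch x n * (1 - x ^ (n + 1)) :=
  Finset.prod_range_succ _ _

lemma qPoch_ne_zero {x : K} (hx : ∀ n, 1 - x ^ (n + 1) ≠ 0) (n : ℕ) : qPoch x n ≠ 0 :=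
  Finset.prod_ne_zero_iff.2 fun j _ => hx j

lemma one_sub_sq_pow_ne_zero {x : K} (hx : ∀ n, 1 - x ^ (n + 1) ≠ 0) (n : ℕ) :
    1 - (x ^ 2) ^ (n + 1) ≠ 0 := by
  rw [← pow_mul, show 2 * (n + 1) = 2 * n + 1 + 1 by ring]
  exact hx _

/-- The probability that a random symmetric `n × n` matrix over a field with `q⁻¹` elements has
corank `r`. -/
def corankProb (q : K) (n r : ℕ) : K :=
  if r ≤ n then q ^ (r * (r + 1) / 2) * qPoch q n / (qPoch q r * qPoch (q ^ 2) ((n - r) / 2))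
  else 0

lemma corankProb_of_lt (q : K) {n r : ℕ} (h : n < r) : corankProb q n r = 0 :=
  if_neg (not_le.2 h)

lemma corankProb_add (q : K) (r δ : ℕ) : corankProb q (r + δ) r =
    q ^ (r * (r + 1) / 2) * qPoch q (r + δ) / (qPoch q r * qPoch (q ^ 2) (δ / 2)) := by
  rw [corankProb, if_pos (Nat.le_add_right r δ), Nat.add_sub_cancel_left]

lemma corankProb_self {q : K} (hq : ∀ n, 1 - q ^ (n + 1) ≠ 0) (n : ℕ) :
    corankProb q n n = q ^ (n * (n + 1) / 2) := by
  have := qPoch_ne_zero hq n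
  simp [corankProb, qPoch_zero, this]

lemma corankProb_succ_zero {q : K} (hq : ∀ n, 1 - q ^ (n + 1) ≠ 0) (n : ℕ) :
    corankProb q (n + 1) 0 =
      (1 - q) * corankProb q n 0 + q * (1 - q ^ n) * corankProb q (n - 1) 0 := by
  simp only [corankProb, zero_le, if_true, zero_mul, Nat.zero_div, pow_zero, one_mul, qPoch_zero,
    Nat.sub_zero]
  have h2 := one_sub_sq_pow_ne_zero hq
  rcases n with _ | n
  · simp [qPoch_succ, qPoch_zero]
  · obtain ⟨e, rfl | rfl⟩ := Nat.even_or_odd' n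
    · rw [show (2 * e + 1 + 1) / 2 = e + 1 by omega, show (2 * e + 1) / 2 = e by omega,
        show (2 * e + 1 - 1) / 2 = e by omega, Nat.add_sub_cancel]
      have := qPoch_ne_zero h2 e
      have := h2 e
      simp only [qPoch_succ]
      field_simp
      ring
    · rw [show (2 * e + 1 + 1 + 1) / 2 = e + 1 by omega, show (2 * e + 1 + 1) / 2 = e + 1 by omega,
        show (2 * e + 1 + 1 - 1) / 2 = e by omega, Nat.add_sub_cancel]
      have := qPoch_ne_zero h2 e
      have := h2 e
      simp only [qPoch_succ]
      field_simp
      ring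

lemma corankProb_succ_succ {q : K} (hq : ∀ n, 1 - q ^ (n + 1) ≠ 0) (n r : ℕ) :
    corankProb q (n + 1) (r + 1) =
      (1 - q) * corankProb q n (r + 1) + q * (1 - q ^ n) * corankProb q (n - 1) (r + 1) +
      q ^ (n + 1) * corankProb q n r := by
  have h2 := one_sub_sq_pow_ne_zero hq
  have hr := qPoch_ne_zero hq r
  have hr1 := hq r
  rcases lt_trichotomy n r with h | rfl | h
  · rw [corankProb_of_lt q (by omega : n + 1 < r + 1), corankProb_of_lt q (by omega : n < r + 1),
      corankProb_of_lt q (by omega : n - 1 < r + 1), corankProb_of_lt q h]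
    ring
  · rw [corankProb_of_lt q (by omega : n < n + 1), corankProb_of_lt q (by omega : n - 1 < n + 1),
      corankProb_self hq, corankProb_self hq, succ_mul_succ_succ_half]
    ring
  · obtain ⟨δ, rfl⟩ := Nat.exists_eq_add_of_lt h
    rcases δ with _ | δ
    · rw [corankProb_of_lt q (by omega : r + 0 + 1 - 1 < r + 1), add_zero, corankProb_self hq,
        corankProb_add, corankProb_add, succ_mul_succ_succ_half]
      simp only [qPoch_succ, Nat.reduceDiv, qPoch_zero]
      field_simp
      ring
    · rw [show r + (δ + 1) + 1 + 1 = (r + 1) + (δ + 2) by ring, corankProb_add,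
        show r + (δ + 1) + 1 = (r + 1) + (δ + 1) by ring, corankProb_add,
        show r + 1 + (δ + 1) - 1 = (r + 1) + δ by omega, corankProb_add,
        show r + 1 + (δ + 1) = r + (δ + 2) by ring, corankProb_add,
        show r + 1 + (δ + 2) = r + δ + 1 + 1 + 1 by ring, show r + (δ + 2) = r + δ + 1 + 1 by ring,
        show r + 1 + δ = r + δ + 1 by ring, succ_mul_succ_succ_half]
      obtain ⟨e, rfl | rfl⟩ := Nat.even_or_odd' δ
      · rw [show (2 * e + 2) / 2 = e + 1 by omega, show (2 * e + 1) / 2 = e by omega,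
          show 2 * e / 2 = e by omega]
        have := qPoch_ne_zero h2 e
        have := h2 e
        simp only [qPoch_succ]
        field_simp
        ring
      · rw [show (2 * e + 1 + 2) / 2 = e + 1 by omega, show (2 * e + 1 + 1) / 2 = e + 1 by omega,
          show (2 * e + 1) / 2 = e by omega]
        have := qPoch_ne_zero h2 e
        have := h2 e
        simp only [qPoch_succ]
        field_simp
        ring

/-- A double sequence obeying the elimination recurrence is the corank average of its boundary
values. -/
lemma eq_sum_corankProb {q : K} (hq : ∀ n, 1 - q ^ (n + 1) ≠ 0) {Φ : ℕ → ℕ → K}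
    (hΦ : ∀ r m, Φ r (m + 1) = (1 - q) * Φ r m + q * (1 - q ^ m) * Φ r (m - 1) +
      q ^ (m + 1) * Φ (r + 1) m) (m : ℕ) :
    ∀ r M, m < M → Φ r m = ∑ j ∈ Finset.range M, corankProb q m j * Φ (r + j) 0 := by
  induction m using Nat.strong_induction_on with
  | _ m ih =>
    intro r M hM
    obtain ⟨M, rfl⟩ := Nat.exists_eq_succ_of_ne_zero (by omega : M ≠ 0)
    rcases m with _ | m
    · rw [Finset.sum_eq_single 0 (fun j _ hj => by
        rw [corankProb_of_lt q (by omega), zero_mul]) (by simp), corankProb_self hq]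
      simp
    · rw [hΦ, ih m (by omega) r (M + 1) (by omega), ih (m - 1) (by omega) r (M + 1) (by omega),
        ih m (by omega) (r + 1) M (by omega), Finset.sum_range_succ', Finset.sum_range_succ',
        Finset.sum_range_succ', corankProb_succ_zero hq]
      simp only [corankProb_succ_succ hq, add_mul, Finset.sum_add_distrib, mul_add,
        Finset.mul_sum, mul_assoc, add_assoc, add_comm 1]
      ring

/-- The product `∏_{i=1}^n (1 - x Q^i)`. -/
def qShifted (Q x : K) (n : ℕ) : K := ∏ i ∈ Finset.range n, (1 - x * Q ^ (i + 1))

lemma qShifted_succ (Q x : K) (n : ℕ) :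
    qShifted Q x (n + 1) = qShifted Q x n * (1 - x * Q ^ (n + 1)) :=
  Finset.prod_range_succ _ _

lemma qShifted_succ' (Q x : K) (n : ℕ) :
    qShifted Q x (n + 1) = (1 - x * Q) * qShifted Q (x * Q) n := by
  rw [qShifted, Finset.prod_range_succ', mul_comm, zero_add, pow_one]
  congr 1
  exact Finset.prod_congr rfl fun i _ => by ring

lemma qShifted_ne_zero {Q x : K} (hx : ∀ n, 1 - x * Q ^ (n + 1) ≠ 0) (n : ℕ) :
    qShifted Q x n ≠ 0 :=
  Finset.prod_ne_zero_iff.2 fun j _ => hx j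

/-- The `q`-binomial coefficient `[n, j]` divided by `qPoch Q n`. -/
def qBinomQuot (Q : K) (n j : ℕ) : K :=
  if j ≤ n then 1 / (qPoch Q j * qPoch Q (n - j)) else 0

lemma qBinomQuot_add (Q : K) (j e : ℕ) :
    qBinomQuot Q (j + e) j = 1 / (qPoch Q j * qPoch Q e) := by
  rw [qBinomQuot, if_pos (Nat.le_add_right j e), Nat.add_sub_cancel_left]

lemma qBinomQuot_of_lt (Q : K) {n j : ℕ} (h : n < j) : qBinomQuot Q n j = 0 :=
  if_neg (not_le.2 h)

lemma qBinomQuot_succ_zero {Q : K} (hQ : ∀ n, 1 - Q ^ (n + 1) ≠ 0) (n : ℕ) :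
    (1 - Q ^ (n + 1)) * qBinomQuot Q (n + 1) 0 = qBinomQuot Q n 0 := by
  have := hQ n
  have := qPoch_ne_zero hQ n
  simp only [qBinomQuot, zero_le, if_true, qPoch_zero, Nat.sub_zero, qPoch_succ]
  field_simp

lemma qBinomQuot_succ_succ {Q : K} (hQ : ∀ n, 1 - Q ^ (n + 1) ≠ 0) (j e : ℕ) :
    (1 - Q ^ (j + e + 1)) * qBinomQuot Q (j + e + 1) (j + 1) =
      qBinomQuot Q (j + e) (j + 1) + Q ^ e * qBinomQuot Q (j + e) j := by
  have := hQ j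
  have := qPoch_ne_zero hQ j
  rw [show j + e + 1 = (j + 1) + e by ring, qBinomQuot_add, qBinomQuot_add]
  rcases e with _ | e
  · rw [qBinomQuot_of_lt Q (by omega)]
    simp only [qPoch_succ, qPoch_zero]
    field_simp
    ring
  · have := hQ e
    have := qPoch_ne_zero hQ e
    rw [show j + (e + 1) = (j + 1) + e by ring, qBinomQuot_add]
    simp only [qPoch_succ]
    field_simp
    ring

/-- Cauchy's identity, the finite Durfee square expansion of `1 / ∏_{i=1}^k (1 - x Q^i)`. -/
lemma sum_qBinomQuot_durfee {Q : K} (hQ : ∀ n, 1 - Q ^ (n + 1) ≠ 0) (k : ℕ) :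
    ∀ x : K, (∀ n, 1 - x * Q ^ (n + 1) ≠ 0) →
      ∑ j ∈ Finset.range (k + 1), qBinomQuot Q k j * (Q ^ (j ^ 2) * x ^ j / qShifted Q x j) =
        1 / (qPoch Q k * qShifted Q x k) := by
  induction k with
  | zero =>
    intro x _
    simp [qBinomQuot, qPoch, qShifted]
  | succ k ih =>
    intro x hx
    have hxQ : ∀ n, 1 - x * Q * Q ^ (n + 1) ≠ 0 := by
      intro n
      rw [mul_assoc, ← pow_succ']
      exact hx (n + 1)
    have h0 : 1 - x * Q ≠ 0 := by simpa using hx 0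
    have hk := hQ k
    have hPk := qPoch_ne_zero hQ k
    have hS := qShifted_ne_zero hx k
    have hxk := hx k
    have hS' := qShifted_ne_zero hxQ
    have hrec : (1 - Q ^ (k + 1)) * ∑ j ∈ Finset.range (k + 1 + 1),
        qBinomQuot Q (k + 1) j * (Q ^ (j ^ 2) * x ^ j / qShifted Q x j) =
        (∑ j ∈ Finset.range (k + 1), qBinomQuot Q k j * (Q ^ (j ^ 2) * x ^ j / qShifted Q x j)) +
        x * Q ^ (k + 1) / (1 - x * Q) * ∑ j ∈ Finset.range (k + 1),
          qBinomQuot Q k j * (Q ^ (j ^ 2) * (x * Q) ^ j / qShifted Q (x * Q) j) := by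
      have hext : ∑ j ∈ Finset.range (k + 1),
          qBinomQuot Q k j * (Q ^ (j ^ 2) * x ^ j / qShifted Q x j) =
          ∑ j ∈ Finset.range (k + 1 + 1),
            qBinomQuot Q k j * (Q ^ (j ^ 2) * x ^ j / qShifted Q x j) := by
        rw [Finset.sum_range_succ _ (k + 1), qBinomQuot_of_lt Q k.lt_succ_self, zero_mul, add_zero]
      rw [hext, Finset.sum_range_succ' _ (k + 1), Finset.sum_range_succ' _ (k + 1), mul_add, ← mul_assoc,
        qBinomQuot_succ_zero hQ, Finset.mul_sum, Finset.mul_sum, add_right_comm,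
        ← Finset.sum_add_distrib]
      congr 1
      refine Finset.sum_congr rfl fun j hj => ?_
      obtain ⟨e, rfl⟩ := Nat.exists_eq_add_of_le (Nat.lt_succ_iff.1 (Finset.mem_range.1 hj))
      rw [← mul_assoc, qBinomQuot_succ_succ hQ, qShifted_succ']
      have := hS' j
      field_simp
      ring
    have hswap : (1 - x * Q) * qShifted Q (x * Q) k = qShifted Q x k * (1 - x * Q ^ (k + 1)) := by
      rw [← qShifted_succ', qShifted_succ]
    have hinv : 1 / (qPoch Q k * qShifted Q (x * Q) k) =
        (1 - x * Q) / (qPoch Q k * (qShifted Q x k * (1 - x * Q ^ (k + 1)))) := by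
      rw [← hswap]
      have := hS' k
      field_simp
    rw [ih x hx, ih (x * Q) hxQ, hinv] at hrec
    rw [← mul_right_inj' hk, hrec, qPoch_succ, qShifted_succ]
    field_simp
    ring

/-- The ratio of the generating functions of determinant valuations of random symmetric matrices
of orders `n` and `0`. -/
def symZeta (q t : K) (n : ℕ) : K :=
  qPoch q (2 * ((n + 1) / 2)) / qPoch (q ^ 2) ((n + 1) / 2) *
    (if Even n then 1 - q ^ (n + 1) * t else 1) /
      ((1 - q * t) * qShifted (q ^ 2) (q * t ^ 2) (n / 2))

lemma symZeta_even (q t : K) (k : ℕ) : symZeta q t (2 * k) =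
    qPoch q (2 * k) / qPoch (q ^ 2) k * (1 - q ^ (2 * k + 1) * t) /
      ((1 - q * t) * qShifted (q ^ 2) (q * t ^ 2) k) := by
  rw [symZeta, if_pos (even_two_mul k), show (2 * k + 1) / 2 = k by omega,
    show 2 * k / 2 = k by omega]

lemma symZeta_odd {q : K} (hq : ∀ n, 1 - q ^ (n + 1) ≠ 0) (t : K) (k : ℕ) :
    symZeta q t (2 * k + 1) =
    qPoch q (2 * k) * (1 - q ^ (2 * k + 1)) / qPoch (q ^ 2) k /
      ((1 - q * t) * qShifted (q ^ 2) (q * t ^ 2) k) := by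
  rw [symZeta, if_neg (by simp), show (2 * k + 1 + 1) / 2 = k + 1 by omega,
    show (2 * k + 1) / 2 = k by omega, show 2 * (k + 1) = 2 * k + 1 + 1 by ring, qPoch_succ,
    qPoch_succ, qPoch_succ]
  have h : (1 - (q ^ 2) ^ (k + 1)) = 1 - q ^ (2 * k + 1 + 1) := by ring
  have := hq (2 * k + 1)
  rw [h, mul_one]
  congr 1
  field_simp

lemma sum_range_two_mul (f : ℕ → K) (n : ℕ) :
    ∑ i ∈ Finset.range (2 * n), f i = ∑ j ∈ Finset.range n, (f (2 * j) + f (2 * j + 1)) := by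
  induction n with
  | zero => simp
  | succ n ih =>
    rw [Nat.mul_succ, Finset.sum_range_succ, Finset.sum_range_succ, ih, Finset.sum_range_succ,
      add_assoc]

lemma symZeta_pair_odd {q t : K} (hq : ∀ n, 1 - q ^ (n + 1) ≠ 0)
    (ht : ∀ n, 1 - q ^ (n + 1) * t ≠ 0) (ht2 : ∀ n, 1 - q * t ^ 2 * (q ^ 2) ^ (n + 1) ≠ 0)
    {j k : ℕ} (hjk : j ≤ k) :
    corankProb q (2 * k + 1) (2 * j) * t ^ (2 * j) * symZeta q t (2 * j) +
      corankProb q (2 * k + 1) (2 * j + 1) * t ^ (2 * j + 1) * symZeta q t (2 * j + 1) =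
    qPoch q (2 * k + 1) / (1 - q * t) * (qBinomQuot (q ^ 2) k j *
      ((q ^ 2) ^ (j ^ 2) * (q * t ^ 2) ^ j / qShifted (q ^ 2) (q * t ^ 2) j)) := by
  obtain ⟨e, rfl⟩ := Nat.exists_eq_add_of_le hjk
  have h2 := one_sub_sq_pow_ne_zero hq
  have hz : 1 - q * t ≠ 0 := by simpa using ht 0
  have hS := qShifted_ne_zero ht2 j
  have hPj := qPoch_ne_zero h2 j
  have hPe := qPoch_ne_zero h2 e
  have hP := qPoch_ne_zero hq (2 * j)
  have hj := hq (2 * j)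
  have e1 := corankProb_add q (2 * j) (2 * e + 1)
  have e2 := corankProb_add q (2 * j + 1) (2 * e)
  rw [show 2 * j + (2 * e + 1) = 2 * (j + e) + 1 by ring, show (2 * e + 1) / 2 = e by omega] at e1
  rw [show 2 * j + 1 + 2 * e = 2 * (j + e) + 1 by ring, show 2 * e / 2 = e by omega,
    succ_mul_succ_succ_half] at e2
  rw [e1, e2, symZeta_even, symZeta_odd hq, qBinomQuot_add, qPoch_succ q (2 * j),
    show 2 * j * (2 * j + 1) / 2 = j * (2 * j + 1) by
      rw [mul_assoc]; exact Nat.mul_div_cancel_left _ two_pos]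
  field_simp
  ring

lemma symZeta_pair_even {q t : K} (hq : ∀ n, 1 - q ^ (n + 1) ≠ 0)
    (ht : ∀ n, 1 - q ^ (n + 1) * t ≠ 0) (ht2 : ∀ n, 1 - q * t ^ 2 * (q ^ 2) ^ (n + 1) ≠ 0)
    {j k : ℕ} (hjk : j ≤ k) :
    corankProb q (2 * k) (2 * j) * t ^ (2 * j) * symZeta q t (2 * j) +
      corankProb q (2 * k) (2 * j + 1) * t ^ (2 * j + 1) * symZeta q t (2 * j + 1) =
    qPoch q (2 * k) * (1 - q ^ (2 * k + 1) * t) / (1 - q * t) * (qBinomQuot (q ^ 2) k j *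
      ((q ^ 2) ^ (j ^ 2) * (q * t ^ 2) ^ j / qShifted (q ^ 2) (q * t ^ 2) j)) := by
  obtain ⟨e, rfl⟩ := Nat.exists_eq_add_of_le hjk
  have h2 := one_sub_sq_pow_ne_zero hq
  have hz : 1 - q * t ≠ 0 := by simpa using ht 0
  have hS := qShifted_ne_zero ht2 j
  have hPj := qPoch_ne_zero h2 j
  have hP := qPoch_ne_zero hq (2 * j)
  have hj := hq (2 * j)
  have e1 := corankProb_add q (2 * j) (2 * e)
  rw [show 2 * j + 2 * e = 2 * (j + e) by ring, show 2 * e / 2 = e by omega] at e1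
  have hexp : 2 * j * (2 * j + 1) / 2 = j * (2 * j + 1) := by
    rw [mul_assoc]
    exact Nat.mul_div_cancel_left _ two_pos
  rw [e1, symZeta_even, symZeta_odd hq, qBinomQuot_add, hexp]
  rcases e with _ | e
  · rw [add_zero, corankProb_of_lt q (2 * j).lt_succ_self, qPoch_zero]
    field_simp
    ring
  · have hPe := qPoch_ne_zero h2 e
    have he := h2 e
    have e2 := corankProb_add q (2 * j + 1) (2 * e + 1)
    rw [show 2 * j + 1 + (2 * e + 1) = 2 * (j + (e + 1)) by ring, show (2 * e + 1) / 2 = e by omega,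
      succ_mul_succ_succ_half, hexp] at e2
    rw [e2, qPoch_succ q (2 * j), qPoch_succ (q ^ 2) e]
    field_simp
    ring

/-- `symZeta` solves the recurrence obtained by conditioning on the corank. -/
lemma symZeta_eq_sum {q t : K} (hq : ∀ n, 1 - q ^ (n + 1) ≠ 0)
    (ht : ∀ n, 1 - q ^ (n + 1) * t ≠ 0) (ht2 : ∀ n, 1 - q * t ^ 2 * (q ^ 2) ^ (n + 1) ≠ 0) (n : ℕ) :
    symZeta q t n = ∑ j ∈ Finset.range (n + 1), corankProb q n j * t ^ j * symZeta q t j := by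
  have h2 := one_sub_sq_pow_ne_zero hq
  have hz : 1 - q * t ≠ 0 := by simpa using ht 0
  obtain ⟨k, rfl | rfl⟩ := Nat.even_or_odd' n
  · have hext : ∑ j ∈ Finset.range (2 * k + 1), corankProb q (2 * k) j * t ^ j * symZeta q t j =
        ∑ j ∈ Finset.range (2 * (k + 1)), corankProb q (2 * k) j * t ^ j * symZeta q t j := by
      rw [show 2 * (k + 1) = 2 * k + 1 + 1 by ring, Finset.sum_range_succ _ (2 * k + 1),
        corankProb_of_lt q (2 * k).lt_succ_self, zero_mul, zero_mul, add_zero]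
    rw [hext, sum_range_two_mul, Finset.sum_congr rfl fun j hj =>
      symZeta_pair_even hq ht ht2 (Nat.lt_succ_iff.1 (Finset.mem_range.1 hj)),
      ← Finset.mul_sum, sum_qBinomQuot_durfee h2 k _ ht2, symZeta_even]
    have := qPoch_ne_zero h2 k
    have := qShifted_ne_zero ht2 k
    field_simp
  · rw [show 2 * k + 1 + 1 = 2 * (k + 1) by ring, sum_range_two_mul,
      Finset.sum_congr rfl fun j hj =>
      symZeta_pair_odd hq ht ht2 (Nat.lt_succ_iff.1 (Finset.mem_range.1 hj)),
      ← Finset.mul_sum, sum_qBinomQuot_durfee h2 k _ ht2, symZeta_odd hq, qPoch_succ]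
    have := qPoch_ne_zero h2 k
    have := qShifted_ne_zero ht2 k
    field_simp

/-- The corank recurrence determines a sequence up to its initial value. -/
lemma eq_mul_symZeta {q t : K} (hq : ∀ n, 1 - q ^ (n + 1) ≠ 0)
    (ht : ∀ n, 1 - q ^ (n + 1) * t ≠ 0) (ht2 : ∀ n, 1 - q * t ^ 2 * (q ^ 2) ^ (n + 1) ≠ 0)
    (hqt : ∀ n, 1 - q ^ ((n + 1) * (n + 1 + 1) / 2) * t ^ (n + 1) ≠ 0) {F : ℕ → K}
    (hF : ∀ n, F n = ∑ j ∈ Finset.range (n + 1), corankProb q n j * t ^ j * F j) (n : ℕ) :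
    F n = F 0 * symZeta q t n := by
  induction n using Nat.strong_induction_on with
  | _ n ih =>
    rcases n with _ | n
    · have hz : 1 - q * t ≠ 0 := by simpa using ht 0
      simp [symZeta, qPoch, qShifted, hz]
    · have h1 := hF (n + 1)
      have h2 := symZeta_eq_sum hq ht ht2 (n + 1)
      rw [Finset.sum_range_succ, corankProb_self hq] at h1 h2
      have h3 : ∑ j ∈ Finset.range (n + 1), corankProb q (n + 1) j * t ^ j * F j =
          F 0 * ∑ j ∈ Finset.range (n + 1), corankProb q (n + 1) j * t ^ j * symZeta q t j := by
        rw [Finset.mul_sum]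
        refine Finset.sum_congr rfl fun j hj => ?_
        rw [ih j (Finset.mem_range.1 hj)]
        ring
      rw [h3] at h1
      refine mul_left_cancel₀ (hqt n) ?_
      linear_combination h1 - F 0 * h2

lemma one_sub_mul_symZeta_one {q t : K} (hq : ∀ n, 1 - q ^ (n + 1) ≠ 0)
    (ht : ∀ n, 1 - q ^ (n + 1) * t ≠ 0) :
    (1 - q * t) * symZeta q t 1 = 1 - q := by
  have hz : 1 - q * t ≠ 0 := by simpa using ht 0
  have h := symZeta_odd hq t 0
  simp only [mul_zero, zero_add, qPoch_zero, qShifted, Finset.range_zero, Finset.prod_empty] at h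
  rw [h]
  field_simp

lemma one_sub_mul_symZeta_odd_succ {q t : K} (hq : ∀ n, 1 - q ^ (n + 1) ≠ 0)
    (ht : ∀ n, 1 - q ^ (n + 1) * t ≠ 0) (ht2 : ∀ n, 1 - q * t ^ 2 * (q ^ 2) ^ (n + 1) ≠ 0)
    (k : ℕ) : (1 - q ^ (2 * k + 3) * t ^ 2) * symZeta q t (2 * (k + 1) + 1) =
      (1 - q ^ (2 * k + 3)) * symZeta q t (2 * k + 1) := by
  have h2 := one_sub_sq_pow_ne_zero hq
  have hz : 1 - q * t ≠ 0 := by simpa using ht 0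
  have hS := qShifted_ne_zero ht2 k
  have hPk := qPoch_ne_zero h2 k
  have hk := hq (2 * k + 1)
  have hk2 := ht2 k
  have e1 : 1 - q * t ^ 2 * (q ^ 2) ^ (k + 1) = 1 - q ^ (2 * k + 3) * t ^ 2 := by ring
  have e2 : 1 - (q ^ 2) ^ (k + 1) = 1 - q ^ (2 * k + 1 + 1) := by ring
  rw [e1] at hk2
  rw [symZeta_odd hq, symZeta_odd hq, qPoch_succ (q ^ 2), qShifted_succ, e1, e2,
    show 2 * (k + 1) = 2 * k + 1 + 1 by ring, qPoch_succ, qPoch_succ,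
    show 2 * k + 1 + 1 + 1 = 2 * k + 3 by ring]
  field_simp

end QSeries

lemma Psym_recurrence {p : ℕ} (hp : p.Prime) {q : ℝ} (hq : q = 1 / p) (n μ : ℕ) :
    Psym n (p ^ μ) = ∑ j ∈ Finset.range (n + 1), corankProb q n j * Psym j (p ^ (μ - j)) := by
  have hp1 : (1 : ℝ) < p := by exact_mod_cast hp.one_lt
  have hq0 : 0 < q := by rw [hq]; positivity
  have hq1 : q < 1 := by rw [hq, div_lt_one (by positivity)]; exact hp1
  rcases Nat.eq_zero_or_pos μ with rfl | hμ
  · simp [Psym_one]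
  have : NeZero (p ^ μ) := ⟨pow_ne_zero _ hp.ne_zero⟩
  have h := eq_sum_corankProb (q := q)
    (fun n => (sub_pos.2 (pow_lt_one₀ hq0.le hq1 n.succ_ne_zero)).ne')
    (patternDensity_succ (isUnit_iff_not_dvd_zmod hp hμ.ne') hq0.ne'
      (by rw [hq]; exact card_dvd_zmod hp hμ.ne')) n 0 (n + 1) n.lt_succ_self
  simpa only [patternDensity_zero_left, zero_add, patternDensity_zero_right hp] using h

section GeneratingSeries

open PowerSeries

lemma map_qPoch {K L : Type*} [Field K] [Field L] (ψ : K →+* L) (x : K) (n : ℕ) :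
    ψ (qPoch x n) = qPoch (ψ x) n := by
  simp [qPoch, map_prod]

lemma map_corankProb {K L : Type*} [Field K] [Field L] (ψ : K →+* L) (q : K) (n r : ℕ) :
    ψ (corankProb q n r) = corankProb (ψ q) n r := by
  unfold corankProb
  split_ifs <;> simp [map_qPoch]

lemma algebraMap_ne_zero_of_constantCoeff {f : ℝ⟦X⟧} (hf : constantCoeff f ≠ 0) :
    algebraMap ℝ⟦X⟧ (FractionRing ℝ⟦X⟧) f ≠ 0 := by
  intro h
  rw [FaithfulSMul.algebraMap_eq_zero_iff] at h
  exact hf (by rw [h, map_zero])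

lemma eq_sum_corankProb_mul_mk {q : ℝ} {a : ℕ → ℕ → ℝ} (h0 : ∀ n, a n 0 = 0)
    (ha : ∀ n μ, a n μ = ∑ j ∈ Finset.range (n + 1), corankProb q n j * a j (μ - j)) (n : ℕ) :
    PowerSeries.mk (a n) = ∑ j ∈ Finset.range (n + 1),
      C (corankProb q n j) * X ^ j * PowerSeries.mk (a j) := by
  ext μ
  rw [coeff_mk, ha, map_sum]
  refine Finset.sum_congr rfl fun j _ => ?_
  rw [mul_assoc, coeff_C_mul, coeff_X_pow_mul', coeff_mk]
  split_ifs with h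
  · rfl
  · rw [Nat.sub_eq_zero_of_le (not_le.1 h).le, h0]

lemma one_sub_mul_mk_odd {q : ℝ} (hq : ∀ n, 1 - q ^ (n + 1) ≠ 0) {a : ℕ → ℕ → ℝ}
    (h0 : ∀ n, a n 0 = 0)
    (ha : ∀ n μ, a n μ = ∑ j ∈ Finset.range (n + 1), corankProb q n j * a j (μ - j)) :
    (1 - C q * X) * PowerSeries.mk (a 1) = C (1 - q) * PowerSeries.mk (a 0) ∧
    ∀ k, (1 - C (q ^ (2 * k + 3)) * X ^ 2) * PowerSeries.mk (a (2 * (k + 1) + 1)) =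
      C (1 - q ^ (2 * k + 3)) * PowerSeries.mk (a (2 * k + 1)) := by
  set φ := algebraMap ℝ⟦X⟧ (FractionRing ℝ⟦X⟧) with hφ
  have inj : Function.Injective φ := FaithfulSMul.algebraMap_injective _ _
  have hqK : ∀ n, 1 - φ (C q) ^ (n + 1) ≠ 0 := fun n => by
    have := algebraMap_ne_zero_of_constantCoeff (f := 1 - C q ^ (n + 1)) (by simpa using hq n)
    simpa using this
  have ht : ∀ n, 1 - φ (C q) ^ (n + 1) * φ X ≠ 0 := fun n => by
    have := algebraMap_ne_zero_of_constantCoeff (f := 1 - C q ^ (n + 1) * X) (by simp)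
    simpa using this
  have ht2 : ∀ n, 1 - φ (C q) * φ X ^ 2 * (φ (C q) ^ 2) ^ (n + 1) ≠ 0 := fun n => by
    have := algebraMap_ne_zero_of_constantCoeff (f := 1 - C q * X ^ 2 * (C q ^ 2) ^ (n + 1))
      (by simp)
    simpa using this
  have hqt : ∀ n, 1 - φ (C q) ^ ((n + 1) * (n + 1 + 1) / 2) * φ X ^ (n + 1) ≠ 0 := fun n => by
    have := algebraMap_ne_zero_of_constantCoeff
      (f := 1 - C q ^ ((n + 1) * (n + 1 + 1) / 2) * X ^ (n + 1)) (by simp)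
    simpa using this
  have key := eq_mul_symZeta hqK ht ht2 hqt (F := fun n => φ (PowerSeries.mk (a n))) fun n => by
    rw [eq_sum_corankProb_mul_mk h0 ha n, map_sum]
    refine Finset.sum_congr rfl fun j _ => ?_
    rw [map_mul, map_mul, map_pow, ← RingHom.comp_apply φ C, map_corankProb, RingHom.comp_apply]
  constructor
  · apply inj
    have h := one_sub_mul_symZeta_one hqK ht
    simp only [map_mul, map_sub, map_one, key 1]
    linear_combination φ (PowerSeries.mk (a 0)) * h
  · intro k
    apply inj
    have h := one_sub_mul_symZeta_odd_succ hqK ht ht2 k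
    simp only [map_mul, map_sub, map_one, map_pow, key (2 * (k + 1) + 1), key (2 * k + 1)]
    linear_combination φ (PowerSeries.mk (a 0)) * h

end GeneratingSeries

section OddSize

variable {p : ℕ} {q : ℝ}

lemma Psym_zero_left {m : ℕ} (hm : 1 < m) : Psym 0 m = 1 := by
  have : Fact (1 < m) := ⟨hm⟩
  have hN : Nsym 0 m = 1 := by
    rw [Nsym, Nat.card_eq_one_iff_unique]
    refine ⟨inferInstance, ⟨⟨0, Matrix.isSymm_zero, ?_⟩⟩⟩
    rw [Matrix.det_fin_zero]
    exact one_ne_zero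
  simp [Psym, hN]

lemma one_sub_pow_ne_zero (hp : p.Prime) (hq : q = 1 / p) (n : ℕ) : 1 - q ^ (n + 1) ≠ 0 := by
  have hp1 : (1 : ℝ) < p := by exact_mod_cast hp.one_lt
  have hq0 : 0 ≤ q := by rw [hq]; positivity
  have hq1 : q < 1 := by rw [hq, div_lt_one (by positivity)]; exact hp1
  exact (sub_pos.2 (pow_lt_one₀ hq0 hq1 n.succ_ne_zero)).ne'

lemma Psym_size_one (hp : p.Prime) (hq : q = 1 / p) (μ : ℕ) : Psym 1 (p ^ μ) = 1 - q ^ μ := by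
  have h := (one_sub_mul_mk_odd (one_sub_pow_ne_zero hp hq)
    (a := fun n μ => Psym n (p ^ μ)) (fun n => by simp [Psym_one])
    (fun n μ => Psym_recurrence hp hq n μ)).1
  induction μ with
  | zero => simp [Psym_one]
  | succ μ ih =>
    have hc := congrArg (PowerSeries.coeff (μ + 1)) h
    rw [sub_mul, one_mul, map_sub, mul_assoc, PowerSeries.coeff_C_mul,
      PowerSeries.coeff_succ_X_mul, PowerSeries.coeff_C_mul] at hc
    simp only [PowerSeries.coeff_mk] at hc
    rw [ih, Psym_zero_left (Nat.one_lt_pow μ.succ_ne_zero hp.one_lt)] at hc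
    linear_combination hc

lemma Psym_odd_add_two (hp : p.Prime) (hq : q = 1 / p) (k μ : ℕ) :
    Psym (2 * (k + 1) + 1) (p ^ (μ + 2)) = q ^ (2 * k + 3) * Psym (2 * (k + 1) + 1) (p ^ μ) +
      (1 - q ^ (2 * k + 3)) * Psym (2 * k + 1) (p ^ (μ + 2)) := by
  have h := (one_sub_mul_mk_odd (one_sub_pow_ne_zero hp hq)
    (a := fun n μ => Psym n (p ^ μ)) (fun n => by simp [Psym_one])
    (fun n μ => Psym_recurrence hp hq n μ)).2 k
  have hc := congrArg (PowerSeries.coeff (μ + 2)) h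
  rw [sub_mul, one_mul, map_sub, mul_assoc, PowerSeries.coeff_C_mul,
    PowerSeries.coeff_X_pow_mul, PowerSeries.coeff_C_mul] at hc
  simp only [PowerSeries.coeff_mk] at hc
  linear_combination hc

lemma Psym_odd_one (hp : p.Prime) (hq : q = 1 / p) (k : ℕ) :
    Psym (2 * (k + 1) + 1) (p ^ 1) = (1 - q ^ (2 * k + 3)) * Psym (2 * k + 1) (p ^ 1) := by
  have h := (one_sub_mul_mk_odd (one_sub_pow_ne_zero hp hq)
    (a := fun n μ => Psym n (p ^ μ)) (fun n => by simp [Psym_one])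
    (fun n μ => Psym_recurrence hp hq n μ)).2 k
  have hc := congrArg (PowerSeries.coeff 1) h
  rw [sub_mul, one_mul, map_sub, mul_assoc, PowerSeries.coeff_C_mul,
    PowerSeries.coeff_X_pow_mul', if_neg (by norm_num), PowerSeries.coeff_C_mul] at hc
  simp only [PowerSeries.coeff_mk] at hc
  linear_combination hc

lemma PiProd_succ (n : ℕ) (t : ℝ) : PiProd (n + 1) t = PiProd n t * (1 - t ^ (n + 1)) :=
  Finset.prod_range_succ _ _

lemma PiProd_ne_zero {t : ℝ} (ht : ∀ n, 1 - t ^ (n + 1) ≠ 0) (n : ℕ) : PiProd n t ≠ 0 :=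
  Finset.prod_ne_zero_iff.2 fun j _ => ht j

lemma T_zero_right (hq : ∀ n, 1 - q ^ (n + 1) ≠ 0) (β k : ℕ) : T q β k 0 = 1 := by
  rcases k with _ | k
  · simp [T]
  · have h := PiProd_ne_zero (one_sub_sq_pow_ne_zero hq) k
    have h0 : PiProd 0 (q ^ 2) = 1 := Finset.prod_range_zero _
    simp [T, h, h0]

lemma T_one_succ (hq : ∀ n, 1 - q ^ (n + 1) ≠ 0) (β s : ℕ) :
    T q β 1 (s + 1) = 1 + q ^ β * T q β 1 s := by
  have h := PiProd_ne_zero (one_sub_sq_pow_ne_zero hq)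
  have h0 : PiProd 0 (q ^ 2) = 1 := Finset.prod_range_zero _
  have hT : ∀ s, T q β 1 s = ∑ j ∈ Finset.range (s + 1), q ^ (β * j) := fun s => by
    rw [T, if_neg one_ne_zero]
    refine Finset.sum_congr rfl fun j _ => ?_
    rw [Nat.add_sub_cancel_left, Nat.sub_self, h0, mul_one, mul_div_cancel_right₀ _ (h j)]
  rw [hT, hT, Finset.sum_range_succ', Finset.mul_sum, mul_zero, pow_zero, add_comm]
  congr 1
  exact Finset.sum_congr rfl fun j _ => by ring

lemma T_succ_succ (hq : ∀ n, 1 - q ^ (n + 1) ≠ 0) (β k s : ℕ) :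
    T q β (k + 1) (s + 1) = T q β k (s + 1) + q ^ (2 * k + β) * T q β (k + 1) s := by
  rcases k with _ | k
  · simpa [T] using T_one_succ hq β s
  have h2 := one_sub_sq_pow_ne_zero hq
  have h := PiProd_ne_zero h2
  have h0 : PiProd 0 (q ^ 2) = 1 := Finset.prod_range_zero _
  simp only [T, Nat.add_eq_zero_iff, one_ne_zero, and_false, if_false]
  rw [Finset.sum_range_succ', Finset.sum_range_succ' _ (s + 1), Finset.mul_sum,
    add_right_comm (Finset.sum _ _),
    ← Finset.sum_add_distrib]
  congr 1
  · refine Finset.sum_congr rfl fun j _ => ?_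
    rw [show k + 1 + 1 + (j + 1) - 1 = k + j + 1 + 1 by omega,
      show k + 1 + (j + 1) - 1 = k + j + 1 by omega, show k + 1 + 1 + j - 1 = k + j + 1 by omega,
      Nat.add_sub_cancel, Nat.add_sub_cancel, PiProd_succ (k + j + 1), PiProd_succ k,
      PiProd_succ j]
    have := h k
    have := h j
    have := h2 k
    have := h2 j
    field_simp
    ring
  · have := h k
    have := h (k + 1)
    simp [h0, this, h k]

/-- The factor `T_3(k,s) - q^μ T_1(k,s)` with `s = ⌊(μ-1)/2⌋`. -/
noncomputable def oddFactor (q : ℝ) (k μ : ℕ) : ℝ :=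
  T q 3 k ((μ - 1) / 2) - q ^ μ * T q 1 k ((μ - 1) / 2)

lemma oddFactor_add_two (hq : ∀ n, 1 - q ^ (n + 1) ≠ 0) (k μ : ℕ) :
    oddFactor q (k + 1) (μ + 2) =
      oddFactor q k (μ + 2) + q ^ (2 * k + 3) * oddFactor q (k + 1) μ := by
  rcases μ with _ | μ
  · simp [oddFactor, T_zero_right hq]
  · simp only [oddFactor, show (μ + 1 + 2 - 1) / 2 = μ / 2 + 1 by omega, Nat.add_sub_cancel,
      T_succ_succ hq]
    ring

lemma Psym_odd_eq (hp : p.Prime) (hq : q = 1 / p) (k μ : ℕ) : Psym (2 * k + 1) (p ^ μ) =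
    PiProd (2 * k + 1) q / ((1 - q) * PiProd k (q ^ 2)) * oddFactor q k μ := by
  have hne := one_sub_pow_ne_zero hp hq
  have h1 : 1 - q ≠ 0 := by simpa using hne 0
  induction k generalizing μ with
  | zero =>
    rw [mul_zero, zero_add, Psym_size_one hp hq]
    simp [PiProd, oddFactor, T, h1]
  | succ k ih =>
    have hk := PiProd_ne_zero (one_sub_sq_pow_ne_zero hne) k
    have hk2 := hne (2 * k + 1)
    have hA : PiProd (2 * (k + 1) + 1) q / ((1 - q) * PiProd (k + 1) (q ^ 2)) =
        (1 - q ^ (2 * k + 3)) * (PiProd (2 * k + 1) q / ((1 - q) * PiProd k (q ^ 2))) := by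
      rw [show 2 * (k + 1) + 1 = 2 * k + 1 + 1 + 1 by ring, PiProd_succ (2 * k + 1 + 1),
        PiProd_succ (2 * k + 1), PiProd_succ k, ← pow_mul,
        show 2 * (k + 1) = 2 * k + 1 + 1 by ring]
      field_simp
    rw [hA]
    induction μ using Nat.twoStepInduction with
    | zero => simp [Psym_one, oddFactor, T_zero_right hne]
    | one =>
      rw [Psym_odd_one hp hq, ih]
      simp [oddFactor, T_zero_right hne, mul_assoc]
    | more μ ihμ _ =>
      rw [Psym_odd_add_two hp hq, ihμ, ih, oddFactor_add_two hne]
      ring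

end OddSize

theorem Psym_odd_explicit (p : ℕ) (hp : p.Prime) (q : ℝ) (hq : q = 1 / p)
    (k μ : ℕ) (hμ : 1 ≤ μ) (s : ℕ) (hs : s = (μ - 1) / 2) :
    Psym (2 * k + 1) (p ^ μ) =
      (PiProd (2 * k + 1) q / ((1 - q) * PiProd k (q ^ 2))) *
        (T q 3 k s - q ^ μ * T q 1 k s) := by
  subst hs
  exact Psym_odd_eq hp hq k μ
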